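/- Let ε > 0 and let (ℓ_i)_{i∈ℕ} be a sequence of real numbers with ℓ_i ≥ ε for all i and ∑_{i} e^{−σ ℓ_i} < ∞ for every real σ > 1, and let Z(s) = ∏_{i∈ℕ} ∏_{k=0}^∞ (1 − e^{−(s+k)ℓ_i}) on {Re(s) > 1}. Then for every complex s with Re(s) > 1, Z′(s)/Z(s) = ∑_{i∈ℕ} ∑_{m=1}^∞ ℓ_i · e^{−s m ℓ_i} / (1 − e^{−m ℓ_i}), where the double series converges absolutely. -/

import Mathlib

/-!
The factors of `Z` are indexed by pairs `(i, k)`, and on a half-plane `re z > a > 1` the quantity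
`exp (-(z + k) * ℓ i)` is at most `exp (-a * ℓ i) * exp (-ε) ^ k` in norm, which is summable over
pairs. So `Z` is a locally uniformly convergent, nonvanishing product over pairs, and
`Z' / Z` is the sum of the logarithmic derivatives of the factors (`logDeriv_tprod_eq_tsum`).

The logarithmic derivative of the factor `(i, k)` expands as a geometric series
`∑_{m ≥ 1} ℓ i * exp (-(s + k) * m * ℓ i)`. The resulting triple series over `(i, m, k)` converges
absolutely (`summable_selbergTerm`); summing it over `k` first is again a geometric series, with sum
`ℓ i * exp (-s * m * ℓ i) / (1 - exp (-m * ℓ i))`, and the theorem follows by exchanging sums.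
-/

open Filter Real Complex

/-- The abstract Selberg zeta function attached to a sequence of lengths `ℓ i`:
`Z s = ∏_i ∏_{k ≥ 0} (1 - exp (-(s + k) * ℓ i))`. -/
noncomputable def selbergZeta (ℓ : ℕ → ℝ) (s : ℂ) : ℂ :=
  ∏' i : ℕ, ∏' k : ℕ, (1 - Complex.exp (-((s + (k : ℂ)) * (ℓ i : ℂ))))

/-- The term of the triple series indexed by `((i, m), k)`, where `m` stands for the multiplicity
`m + 1`. -/
noncomputable def selbergTerm (ℓ : ℕ → ℝ) (s : ℂ) (q : (ℕ × ℕ) × ℕ) : ℂ :=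
  (ℓ q.1.1 : ℂ) * Complex.exp (-((s + (q.2 : ℂ)) * ((q.1.2 : ℂ) + 1) * (ℓ q.1.1 : ℂ)))

lemma norm_exp_neg_mul_lt_one {z : ℂ} (hz : 0 < z.re) {x : ℝ} (hx : 0 < x) :
    ‖Complex.exp (-(z * (x : ℂ)))‖ < 1 := by
  rw [Complex.norm_exp, Real.exp_lt_one_iff]
  simpa using mul_pos hz hx

lemma one_sub_exp_ne_zero {z : ℂ} (hz : 0 < z.re) {x : ℝ} (hx : 0 < x) :
    1 - Complex.exp (-(z * (x : ℂ))) ≠ 0 := by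
  intro h
  have h1 := norm_exp_neg_mul_lt_one hz hx
  rw [← sub_eq_zero.mp h] at h1
  simp at h1

/-- Summing over `k`: a geometric series of ratio `exp (-(m + 1) * ℓ i)`. -/
lemma hasSum_selbergTerm_k {ℓ : ℕ → ℝ} (hpos : ∀ i, 0 < ℓ i) (s : ℂ) (i m : ℕ) :
    HasSum (fun k => selbergTerm ℓ s ((i, m), k))
      ((ℓ i : ℂ) * Complex.exp (-(s * ((m : ℂ) + 1) * (ℓ i : ℂ)))
          / (1 - Complex.exp (-(((m : ℂ) + 1) * (ℓ i : ℂ))))) := by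
  have hre : 0 < ((m : ℂ) + 1).re := by simp; positivity
  have h := (hasSum_geometric_of_norm_lt_one (norm_exp_neg_mul_lt_one hre (hpos i))).mul_left
    ((ℓ i : ℂ) * Complex.exp (-(s * ((m : ℂ) + 1) * (ℓ i : ℂ))))
  rw [← div_eq_mul_inv] at h
  refine (congrArg (HasSum · _) (funext ?_)).mpr h
  intro k
  simp only [selbergTerm]
  rw [mul_assoc (ℓ i : ℂ), ← Complex.exp_nat_mul, ← Complex.exp_add]
  congr 2
  ring

/-- Summing over `m`: a geometric series of ratio `exp (-(s + k) * ℓ i)` without its first term. -/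
lemma hasSum_selbergTerm_m {ℓ : ℕ → ℝ} (hpos : ∀ i, 0 < ℓ i) {s : ℂ} (hs : 0 < s.re) (i k : ℕ) :
    HasSum (fun m => selbergTerm ℓ s ((i, m), k))
      ((ℓ i : ℂ) * Complex.exp (-((s + k) * (ℓ i : ℂ)))
          / (1 - Complex.exp (-((s + k) * (ℓ i : ℂ))))) := by
  have hre : 0 < (s + k).re := by simp; positivity
  have h := (hasSum_geometric_of_norm_lt_one (norm_exp_neg_mul_lt_one hre (hpos i))).mul_left
    ((ℓ i : ℂ) * Complex.exp (-((s + k) * (ℓ i : ℂ))))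
  rw [← div_eq_mul_inv] at h
  refine (congrArg (HasSum · _) (funext ?_)).mpr h
  intro m
  simp only [selbergTerm]
  rw [mul_assoc (ℓ i : ℂ), ← Complex.exp_nat_mul, ← Complex.exp_add]
  congr 2
  ring

/-- The majorant used for local uniform convergence of the product over pairs. -/
lemma summable_exp_mul_pow {ε : ℝ} (hε : 0 < ε) {ι : Type*} {b : ι → ℝ} (hb : Summable b)
    (hb0 : 0 ≤ b) : Summable (fun p : ι × ℕ => b p.1 * Real.exp (-ε) ^ p.2) :=
  hb.mul_of_nonneg
    (summable_geometric_of_lt_one (Real.exp_pos _).le (Real.exp_lt_one_iff.mpr (by linarith)))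
    hb0 (fun _ => by positivity)

/-- The triple series is dominated by the product of `∑_i ℓ i * exp (-σ * ℓ i)`, with `σ = re s`,
and two geometric series of ratio `exp (-ε)`. -/
lemma summable_selbergTerm {ε : ℝ} (hε : 0 < ε) {ℓ : ℕ → ℝ} (hℓ : ∀ i, ε ≤ ℓ i)
    (hsum : ∀ σ : ℝ, 1 < σ → Summable (fun i => Real.exp (-(σ * ℓ i)))) {s : ℂ} (hs : 1 < s.re) :
    Summable (fun q => ‖selbergTerm ℓ s q‖) := by
  have hpos : ∀ i, 0 < ℓ i := fun i => hε.trans_le (hℓ i)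
  have h0 : Summable (fun i => ℓ i * Real.exp (-(s.re * ℓ i))) := by
    -- The factor `ℓ i` costs half of the margin between `1` and `re s`.
    set δ := (s.re - 1) / 2 with hδ
    have hδ0 : 0 < δ := by linarith
    refine ((hsum (1 + δ) (by linarith)).mul_left δ⁻¹).of_nonneg_of_le
      (fun i => by have := hpos i; positivity) fun i => ?_
    have h1 : δ * ℓ i ≤ Real.exp (δ * ℓ i) := by linarith [Real.add_one_le_exp (δ * ℓ i)]
    have h2 : ℓ i ≤ δ⁻¹ * Real.exp (δ * ℓ i) := by
      rwa [le_inv_mul_iff₀ hδ0]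
    calc ℓ i * Real.exp (-(s.re * ℓ i))
        ≤ δ⁻¹ * Real.exp (δ * ℓ i) * Real.exp (-(s.re * ℓ i)) := by gcongr
      _ = δ⁻¹ * Real.exp (-((1 + δ) * ℓ i)) := by
        rw [mul_assoc, ← Real.exp_add]
        congr 2
        rw [hδ]; ring
  have h1 := summable_exp_mul_pow hε
    (summable_exp_mul_pow hε h0 (fun i => by have := hpos i; positivity))
    (fun p => by have := hpos p.1; positivity)
  refine h1.of_nonneg_of_le (fun _ => norm_nonneg _) ?_
  rintro ⟨⟨i, m⟩, k⟩
  have hp := hpos i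
  have hm : (0 : ℝ) ≤ m := m.cast_nonneg
  have hk : (0 : ℝ) ≤ k := k.cast_nonneg
  have hre : (-((s + (k : ℂ)) * ((m : ℂ) + 1) * (ℓ i : ℂ))).re
      = -((s.re + k) * (m + 1) * ℓ i) := by simp
  simp only [selbergTerm]
  rw [norm_mul, Complex.norm_exp, hre, Complex.norm_real, Real.norm_of_nonneg hp.le,
    ← Real.exp_nat_mul, ← Real.exp_nat_mul, mul_assoc (ℓ i), mul_assoc (ℓ i), ← Real.exp_add,
    ← Real.exp_add]
  gcongr
  have e1 : (m : ℝ) * ε ≤ s.re * m * ℓ i :=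
    mul_le_mul (by nlinarith) (hℓ i) hε.le (by positivity)
  have e2 : (k : ℝ) * ε ≤ k * (m + 1) * ℓ i :=
    mul_le_mul (by nlinarith) (hℓ i) hε.le (by positivity)
  linarith

/-- `Z' / Z` is the sum over pairs `(i, k)` of the logarithmic derivatives of the factors, provided
that this sum converges. The iterated product defining `Z` is a product over pairs because the
latter converges absolutely. -/
lemma logDeriv_selbergZeta {ε : ℝ} (hε : 0 < ε) {ℓ : ℕ → ℝ} (hℓ : ∀ i, ε ≤ ℓ i)
    (hsum : ∀ σ : ℝ, 1 < σ → Summable (fun i => Real.exp (-(σ * ℓ i)))) {s : ℂ} (hs : 1 < s.re)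
    (hm : Summable fun p : ℕ × ℕ => (ℓ p.1 : ℂ) * Complex.exp (-((s + p.2) * (ℓ p.1 : ℂ)))
          / (1 - Complex.exp (-((s + p.2) * (ℓ p.1 : ℂ))))) :
    logDeriv (selbergZeta ℓ) s = ∑' p : ℕ × ℕ,
      (ℓ p.1 : ℂ) * Complex.exp (-((s + p.2) * (ℓ p.1 : ℂ)))
          / (1 - Complex.exp (-((s + p.2) * (ℓ p.1 : ℂ)))) := by
  have hpos : ∀ i, 0 < ℓ i := fun i => hε.trans_le (hℓ i)
  -- A half-plane `re z > a` around `s` on which the majorant is uniform.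
  obtain ⟨a, ha1, has⟩ := exists_between hs
  set U : Set ℂ := {z | a < z.re} with hU
  have hUo : IsOpen U := isOpen_lt continuous_const Complex.continuous_re
  set f : ℕ × ℕ → ℂ → ℂ := fun p z => -Complex.exp (-((z + (p.2 : ℂ)) * (ℓ p.1 : ℂ))) with hf
  have hu := summable_exp_mul_pow hε (hsum a ha1) (fun i => (Real.exp_pos _).le)
  have hbound : ∀ p, ∀ z ∈ U, ‖f p z‖ ≤ Real.exp (-(a * ℓ p.1)) * Real.exp (-ε) ^ p.2 := by
    rintro ⟨i, k⟩ z hz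
    have hz' : a < z.re := hz
    have hre : (-((z + (k : ℂ)) * (ℓ i : ℂ))).re = -((z.re + k) * ℓ i) := by simp
    simp only [hf, norm_neg]
    rw [Complex.norm_exp, hre, ← Real.exp_nat_mul, ← Real.exp_add]
    gcongr
    have e1 : a * ℓ i ≤ z.re * ℓ i := mul_le_mul_of_nonneg_right hz'.le (hpos i).le
    have e2 : (k : ℝ) * ε ≤ k * ℓ i := mul_le_mul_of_nonneg_left (hℓ i) k.cast_nonneg
    linarith
  have hdiff : ∀ p, Differentiable ℂ (f p) := fun p => by simp only [hf]; fun_prop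
  have hprod : MultipliableLocallyUniformlyOn (fun p z => 1 + f p z) U :=
    Summable.multipliableLocallyUniformlyOn_one_add hUo hu (.of_forall hbound)
      fun p => (hdiff p).continuous.continuousOn
  have hns : ∀ z ∈ U, Summable fun p => ‖f p z‖ := fun z hz =>
    hu.of_nonneg_of_le (fun _ => norm_nonneg _) fun p => hbound p z hz
  have hne : ∀ p, 1 + f p s ≠ 0 := fun p => by
    have hre : 0 < (s + (p.2 : ℂ)).re := by simp; positivity
    simpa [hf, sub_eq_add_neg] using one_sub_exp_ne_zero hre (hpos p.1)
  have hZ : ∀ z ∈ U, selbergZeta ℓ z = ∏' p, (1 + f p z) := fun z hz => by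
    rw [Multipliable.tprod_prod' (multipliable_one_add_of_summable (hns z hz)) fun i =>
      multipliable_one_add_of_summable ((hns z hz).prod_factor i)]
    simp only [selbergZeta, hf, sub_eq_add_neg]
  have hev : selbergZeta ℓ =ᶠ[nhds s] fun z => ∏' p, (1 + f p z) := by
    filter_upwards [hUo.mem_nhds has] with z hz using hZ z hz
  have hld : ∀ p, logDeriv (fun z => 1 + f p z) s
      = (ℓ p.1 : ℂ) * Complex.exp (-((s + p.2) * (ℓ p.1 : ℂ)))
          / (1 - Complex.exp (-((s + p.2) * (ℓ p.1 : ℂ)))) := fun p => by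
    have hd : HasDerivAt (fun z => 1 + f p z)
        (-(Complex.exp (-((s + (p.2 : ℂ)) * (ℓ p.1 : ℂ))) * -(1 * (ℓ p.1 : ℂ)))) s :=
      (((((hasDerivAt_id s).add_const (p.2 : ℂ)).mul_const (ℓ p.1 : ℂ)).neg.cexp).neg).const_add 1
    rw [logDeriv_apply, hd.deriv]
    simp only [hf, sub_eq_add_neg]
    congr 1
    ring
  rw [logDeriv_apply, hev.deriv_eq, hev.eq_of_nhds, ← logDeriv_apply,
    logDeriv_tprod_eq_tsum hUo has hne (fun p => by have := hdiff p; fun_prop)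
      (by simpa only [hld] using hm) hprod (tprod_one_add_ne_zero_of_summable hne (hns s has))]
  simp only [hld]

/-- If `ℓ i ≥ ε > 0` for all `i` and `∑ i, exp (-(σ * ℓ i)) < ∞` for every real
`σ > 1`, then for every complex `s` with `re s > 1` the logarithmic derivative of
`Z s = ∏_i ∏_{k ≥ 0} (1 - exp (-(s + k) * ℓ i))` satisfies
`Z'/Z (s) = ∑_i ∑_{m ≥ 1} ℓ i * exp (-(s * m * ℓ i)) / (1 - exp (-(m * ℓ i)))`,
the double series converging absolutely.  (Below `m ≥ 1` is encoded as `m + 1` with `m : ℕ`.) -/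
theorem statement5 (ε : ℝ) (hε : 0 < ε) (ℓ : ℕ → ℝ) (hℓ : ∀ i, ε ≤ ℓ i)
    (hsum : ∀ σ : ℝ, 1 < σ → Summable (fun i => Real.exp (-(σ * ℓ i)))) :
    ∀ s : ℂ, 1 < s.re →
      Summable (fun p : ℕ × ℕ =>
        ‖(ℓ p.1 : ℂ) * Complex.exp (-(s * ((p.2 : ℂ) + 1) * (ℓ p.1 : ℂ)))
          / (1 - Complex.exp (-(((p.2 : ℂ) + 1) * (ℓ p.1 : ℂ))))‖) ∧
      deriv (selbergZeta ℓ) s / selbergZeta ℓ s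
        = ∑' (i : ℕ), ∑' (m : ℕ),
            (ℓ i : ℂ) * Complex.exp (-(s * ((m : ℂ) + 1) * (ℓ i : ℂ)))
              / (1 - Complex.exp (-(((m : ℂ) + 1) * (ℓ i : ℂ)))) := by
  intro s hs
  have hpos : ∀ i, 0 < ℓ i := fun i => hε.trans_le (hℓ i)
  have hT := summable_selbergTerm hε hℓ hsum hs
  have hk := hasSum_selbergTerm_k hpos s
  have hmm := hasSum_selbergTerm_m hpos (s := s) (by linarith)
  have hdouble : Summable (fun p : ℕ × ℕ =>
        ‖(ℓ p.1 : ℂ) * Complex.exp (-(s * ((p.2 : ℂ) + 1) * (ℓ p.1 : ℂ)))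
          / (1 - Complex.exp (-(((p.2 : ℂ) + 1) * (ℓ p.1 : ℂ))))‖) := by
    refine hT.prod.of_nonneg_of_le (fun _ => norm_nonneg _) fun p => ?_
    rw [← (hk p.1 p.2).tsum_eq]
    exact norm_tsum_le_tsum_norm (hT.prod_factor p)
  refine ⟨hdouble, ?_⟩
  -- The reindexing `((i, k), m) ↦ ((i, m), k)`.
  let e : (ℕ × ℕ) × ℕ ≃ (ℕ × ℕ) × ℕ :=
    ⟨fun q => ((q.1.1, q.2), q.1.2), fun q => ((q.1.1, q.2), q.1.2), fun _ => rfl, fun _ => rfl⟩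
  have hT' : Summable (selbergTerm ℓ s) := hT.of_norm
  have hTe : Summable (fun q => selbergTerm ℓ s (e q)) := e.summable_iff.mpr hT'
  have hpair := hTe.hasSum.prod_fiberwise fun p => hmm p.1 p.2
  rw [← logDeriv_apply, logDeriv_selbergZeta hε hℓ hsum hs hpair.summable, hpair.tsum_eq,
    e.tsum_eq, ← (hT'.hasSum.prod_fiberwise fun p => hk p.1 p.2).tsum_eq]
  exact hdouble.of_norm.tsum_prod
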